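/- Let n ∈ ℕ₊, 1 ≤ k ≤ n, and ε ∈ (0, 1/4]. Let S ⊆ [n] have size exactly k, and let p_S be the distribution on {−1,1}^n with p_S(x) = (1+4ε)·2^{−n} if Π_{i∈S} x_i = 1 and p_S(x) = (1−4ε)·2^{−n} otherwise. If J ⊆ [n] has size at most k and there exists a junta distribution g over J with dtv(p_S, g) ≤ ε, then J = S. -/

import Mathlib

/-!
If `J ≠ S` and `J` has at most as many elements as `S`, then some `i ∈ S` lies outside `J`.
Flipping the `i`-th bit preserves every junta distribution `g` over `J`, but it negates the parity
on `S`, so it moves the value of `p_S` by exactly `8 ε 2⁻ⁿ` (`pParity_flipBit`). By the triangle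
inequality `|p_S(x) - g(x)| + |p_S(x') - g(x')| ≥ 8 ε 2⁻ⁿ`, where `x'` is `x` with bit `i` flipped.
Summing over all `x` counts every point twice, whence `dtv p_S g ≥ 2 ε > ε`.
-/

open Finset

namespace JuntaPaper

/-- The Boolean cube `{-1,1}^n`, encoded with `true ↦ 1` and `false ↦ -1`. -/
abbrev Cube (n : ℕ) := Fin n → Bool

/-- The real value of a bit. -/
noncomputable def bval (b : Bool) : ℝ := if b then 1 else -1

/-- `p` is a probability distribution on the cube. -/
def IsDist {n : ℕ} (p : Cube n → ℝ) : Prop :=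
  (∀ x, 0 ≤ p x) ∧ ∑ x, p x = 1

/-- Total variation distance between two distributions on a finite set. -/
noncomputable def dtv {α : Type*} [Fintype α] (p q : α → ℝ) : ℝ :=
  (1 / 2) * ∑ x, |p x - q x|

/-- The uniform distribution on the cube. -/
noncomputable def uniform (n : ℕ) : Cube n → ℝ := fun _ => (2 : ℝ)⁻¹ ^ n

/-- `p` is a junta distribution over the coordinates in `J`. -/
def JuntaOn {n : ℕ} (J : Finset (Fin n)) (p : Cube n → ℝ) : Prop :=
  ∀ x y : Cube n, (∀ i ∈ J, x i = y i) → p x = p y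

/-- The mean vector of a distribution on the cube. -/
noncomputable def meanVec {n : ℕ} (p : Cube n → ℝ) (i : Fin n) : ℝ :=
  ∑ x, p x * bval (x i)

/-- A restriction: `none` means `*` (free), `some b` fixes the coordinate to `b`. -/
abbrev Restr (n : ℕ) := Fin n → Option Bool

/-- `x` agrees with the restriction `ρ` on all fixed coordinates. -/
def agrees {n : ℕ} (ρ : Restr n) (x : Cube n) : Prop :=
  ∀ i : Fin n, ∀ b : Bool, ρ i = some b → x i = b

instance {n : ℕ} (ρ : Restr n) (x : Cube n) : Decidable (agrees ρ x) :=
  inferInstanceAs (Decidable (∀ i : Fin n, ∀ b : Bool, ρ i = some b → x i = b))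

/-- The set of free (star) coordinates of a restriction. -/
def starsOf {n : ℕ} (ρ : Restr n) : Finset (Fin n) :=
  Finset.univ.filter (fun i => ρ i = none)

/-- The probability mass of the subcube described by `ρ`. -/
noncomputable def mass {n : ℕ} (p : Cube n → ℝ) (ρ : Restr n) : ℝ :=
  ∑ x, if agrees ρ x then p x else 0

/-- The conditional probability of `x` given the subcube `ρ` (this is the restricted
distribution `p|ρ`, viewed on completions of `ρ`). -/
noncomputable def condProb {n : ℕ} (p : Cube n → ℝ) (ρ : Restr n) (x : Cube n) : ℝ :=
  (if agrees ρ x then p x else 0) / mass p ρ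

/-- The `i`-th coordinate of the mean vector of the restricted distribution `p|ρ`. -/
noncomputable def condMean {n : ℕ} (p : Cube n → ℝ) (ρ : Restr n) (i : Fin n) : ℝ :=
  ∑ x, condProb p ρ x * bval (x i)

/-- The Euclidean norm `‖μ(p|ρ)‖₂` of the mean vector of the restricted
distribution `p|ρ` (over its free coordinates). -/
noncomputable def restNorm {n : ℕ} (p : Cube n → ℝ) (ρ : Restr n) : ℝ :=
  Real.sqrt (∑ i, (if ρ i = none then condMean p ρ i else 0) ^ 2)

/-- The restriction with stars exactly on `S` and fixed to `x` elsewhere. -/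
def restrictOn {n : ℕ} (S : Finset (Fin n)) (x : Cube n) : Restr n :=
  fun i => if i ∈ S then none else some (x i)

/-- Probability that `S_σ(T)` produces `S ⊆ T`. -/
noncomputable def subsetProb {n : ℕ} (σ : ℝ) (T S : Finset (Fin n)) : ℝ :=
  σ ^ S.card * (1 - σ) ^ (T.card - S.card)

/-- Expectation of `F(ν)` for `ν ∼ D_σ(p|ρ)`: draw `x ∼ p` conditioned on agreeing with
`ρ`, draw `S ⊆ stars(ρ)` including each element independently with probability `σ`, and
evaluate `F` on the combined restriction (stars exactly on `S`). -/
noncomputable def EDσCond {n : ℕ} (p : Cube n → ℝ) (ρ : Restr n) (σ : ℝ)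
    (F : Restr n → ℝ) : ℝ :=
  ∑ x, condProb p ρ x *
    ∑ S ∈ (starsOf ρ).powerset, subsetProb σ (starsOf ρ) S * F (restrictOn S x)

/-- The all-stars restriction (so `p|allStars n = p`). -/
def allStars (n : ℕ) : Restr n := fun _ => none

/-- The hard distribution `p_S`: it puts mass `(1+4ε)2^{-n}` on points whose parity on
`S` is `1`, and `(1-4ε)2^{-n}` on the other points. -/
noncomputable def pParity {n : ℕ} (S : Finset (Fin n)) (ε : ℝ) : Cube n → ℝ :=
  fun x => if (∏ i ∈ S, bval (x i)) = 1 then (1 + 4 * ε) * (2 : ℝ)⁻¹ ^ n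
           else (1 - 4 * ε) * (2 : ℝ)⁻¹ ^ n

/-- The involution of the cube that negates the `i`-th coordinate. -/
def flipBit {n : ℕ} (i : Fin n) (x : Cube n) : Cube n :=
  Function.update x i (!x i)

lemma flipBit_involutive {n : ℕ} (i : Fin n) : Function.Involutive (flipBit i) := by
  intro x
  simp [flipBit]

lemma prod_bval_flipBit {n : ℕ} {S : Finset (Fin n)} {i : Fin n} (hi : i ∈ S) (x : Cube n) :
    ∏ j ∈ S, bval (flipBit i x j) = -∏ j ∈ S, bval (x j) := by
  rw [← Finset.mul_prod_erase S _ hi, ← Finset.mul_prod_erase S (fun j => bval (x j)) hi]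
  have h : ∏ j ∈ S.erase i, bval (flipBit i x j) = ∏ j ∈ S.erase i, bval (x j) :=
    Finset.prod_congr rfl fun j hj => by simp [flipBit, Finset.ne_of_mem_erase hj]
  rw [h]
  cases hx : x i <;> simp [flipBit, bval, hx]

lemma prod_bval_eq_or {n : ℕ} (S : Finset (Fin n)) (x : Cube n) :
    ∏ j ∈ S, bval (x j) = 1 ∨ ∏ j ∈ S, bval (x j) = -1 := by
  refine Finset.prod_induction _ (fun r : ℝ => r = 1 ∨ r = -1) ?_ (Or.inl rfl) ?_
  · rintro a b (rfl | rfl) (rfl | rfl) <;> norm_num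
  · intro j _
    cases x j <;> simp [bval]

lemma pParity_flipBit {n : ℕ} {S : Finset (Fin n)} {i : Fin n} (hi : i ∈ S) {ε : ℝ}
    (hε : 0 ≤ ε) (x : Cube n) :
    |pParity S ε x - pParity S ε (flipBit i x)| = 8 * ε * (2 : ℝ)⁻¹ ^ n := by
  have hpos : 0 ≤ 8 * ε * (2 : ℝ)⁻¹ ^ n := by positivity
  unfold pParity
  rw [prod_bval_flipBit hi]
  rcases prod_bval_eq_or S x with h | h
  · rw [h, if_pos rfl, if_neg (by norm_num), ← abs_of_nonneg hpos]
    congr 1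
    ring
  · rw [h, if_neg (by norm_num), if_pos (by norm_num), ← abs_of_nonneg hpos, ← abs_neg]
    congr 1
    ring

/-- A function that ignores some coordinate of `S` is at distance at least `2 ε` from `p_S`. -/
lemma two_mul_le_dtv {n : ℕ} {S J : Finset (Fin n)} {i : Fin n} (hiS : i ∈ S) (hiJ : i ∉ J)
    {ε : ℝ} (hε : 0 ≤ ε) {g : Cube n → ℝ} (hg : JuntaOn J g) :
    2 * ε ≤ dtv (pParity S ε) g := by
  have hflip : ∑ x, |pParity S ε (flipBit i x) - g (flipBit i x)|
      = ∑ x, |pParity S ε x - g x| :=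
    (flipBit_involutive i).bijective.sum_comp fun x => |pParity S ε x - g x|
  have hpair (x : Cube n) : 8 * ε * (2 : ℝ)⁻¹ ^ n ≤
      |pParity S ε x - g x| + |pParity S ε (flipBit i x) - g (flipBit i x)| := by
    have hgx : g (flipBit i x) = g x := hg _ _ fun j hj => by
      have hji : j ≠ i := fun h => hiJ (h ▸ hj)
      simp [flipBit, hji]
    rw [← pParity_flipBit hiS hε x, hgx, abs_sub_comm (pParity S ε (flipBit i x))]
    exact abs_sub_le _ _ _
  have hsum := Finset.sum_le_sum fun x (_ : x ∈ Finset.univ) => hpair x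
  have hconst : ∑ _x : Cube n, 8 * ε * (2 : ℝ)⁻¹ ^ n = 8 * ε := by
    have h2 : (2 : ℝ) ^ n * (2 : ℝ)⁻¹ ^ n = 1 := by rw [← mul_pow]; norm_num
    simp only [Finset.sum_const, Finset.card_univ, Fintype.card_fun, Fintype.card_bool,
      Fintype.card_fin, nsmul_eq_mul]
    push_cast
    linear_combination 8 * ε * h2
  rw [hconst, Finset.sum_add_distrib, hflip] at hsum
  unfold dtv
  linarith

/-- Let `n ≥ 1`, `1 ≤ k ≤ n`, `ε ∈ (0,1/4]`, and let `S ⊆ [n]` have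
size exactly `k`.  If `J ⊆ [n]` has size at most `k` and there exists a junta
distribution `g` over `J` with `dtv(p_S, g) ≤ ε`, then `J = S`. -/
theorem statement6 (n k : ℕ) (hn : 0 < n) (hk1 : 1 ≤ k) (hkn : k ≤ n)
    (ε : ℝ) (hε0 : 0 < ε) (hε : ε ≤ 1 / 4)
    (S J : Finset (Fin n)) (hS : S.card = k) (hJ : J.card ≤ k)
    (hex : ∃ g : Cube n → ℝ, IsDist g ∧ JuntaOn J g ∧ dtv (pParity S ε) g ≤ ε) :
    J = S := by
  obtain ⟨g, -, hg, hd⟩ := hex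
  have hsub : S ⊆ J := by
    intro i hiS
    by_contra hiJ
    linarith [two_mul_le_dtv hiS hiJ hε0.le hg]
  exact (Finset.eq_of_subset_of_card_le hsub (hJ.trans_eq hS.symm)).symm

end JuntaPaper
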